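/- ψ(11/12) = −γ − ln 24 + (2 + √3)·(π/2) + √3·ln(2 − √3) − ln √3, where ψ is the digamma function and γ is the Euler–Mascheroni constant. -/

import Mathlib

noncomputable def digamma (x : ℝ) : ℝ := deriv Real.Gamma x / Real.Gamma x

/-!
Abel's theorem sums `∑ zⁿ / n` to `-log (1 - z)` on the whole closed unit disc minus `1`, and
log-convexity of `Γ` gives `ψ(x) + γ = lim (∑ 1 / (k + 1) - ∑ 1 / (k + x))`. For `x = m / q` the two
sums run over residue classes modulo `q`; detecting these with the powers of a primitive `q`-th root
of unity `ζ` turns the limit into a combination of the `log (1 - ζ ^ j)`, whose real part is Gauss's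
digamma formula.
-/

open Filter Finset Real Topology

section LogSeries

lemma one_sub_mem_slitPlane {z : ℂ} (hz : ‖z‖ ≤ 1) (hz1 : z ≠ 1) : 1 - z ∈ Complex.slitPlane := by
  rw [Complex.mem_slitPlane_iff, Complex.sub_re, Complex.sub_im, Complex.one_re, Complex.one_im]
  by_contra! h
  exact hz1 (Complex.ext (le_antisymm ((Complex.re_le_norm z).trans hz) (sub_nonpos.1 h.1))
    (by simpa using h.2))

lemma norm_geom_sum_le {K : Type*} [NormedDivisionRing K] {z : K} (hz : ‖z‖ ≤ 1) (hz1 : z ≠ 1)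
    (n : ℕ) :
    ‖∑ i ∈ range n, z ^ i‖ ≤ 2 / ‖z - 1‖ := by
  rw [geom_sum_eq hz1, norm_div]
  gcongr
  calc ‖z ^ n - 1‖ ≤ ‖z‖ ^ n + 1 := by simpa using norm_sub_le (z ^ n) 1
    _ ≤ 2 := by linarith [pow_le_one₀ (norm_nonneg z) hz (n := n)]

lemma cauchySeq_sum_pow_div {z : ℂ} (hz : ‖z‖ ≤ 1) (hz1 : z ≠ 1) :
    CauchySeq fun N ↦ ∑ n ∈ range N, z ^ (n + 1) / ((n : ℂ) + 1) := by
  have hanti : Antitone fun n : ℕ ↦ 1 / ((n : ℝ) + 1) := fun _ _ ↦ Nat.one_div_le_one_div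
  have hbound (N : ℕ) : ‖∑ n ∈ range N, z ^ (n + 1)‖ ≤ 2 / ‖z - 1‖ := by
    simp only [pow_succ]
    rw [← sum_mul, norm_mul]
    exact (mul_le_of_le_one_right (norm_nonneg _) hz).trans (norm_geom_sum_le hz hz1 N)
  have h := hanti.cauchySeq_series_mul_of_tendsto_zero_of_bounded
    tendsto_one_div_add_atTop_nhds_zero_nat hbound
  simpa [div_eq_inv_mul] using h

theorem tendsto_sum_pow_div_neg_log {z : ℂ} (hz : ‖z‖ ≤ 1) (hz1 : z ≠ 1) :
    Tendsto (fun N ↦ ∑ n ∈ range N, z ^ (n + 1) / ((n : ℂ) + 1)) atTop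
      (𝓝 (-Complex.log (1 - z))) := by
  obtain ⟨l, hl⟩ := cauchySeq_tendsto_of_complete (cauchySeq_sum_pow_div hz hz1)
  have habel := tendsto_map'_iff.1 (Complex.tendsto_tsum_powerSeries_nhdsWithin_lt hl)
  have hmul : Tendsto (fun t : ℝ ↦
      (t : ℂ) * ∑' n : ℕ, z ^ (n + 1) / ((n : ℂ) + 1) * (t : ℂ) ^ n) (𝓝[<] 1) (𝓝 l) := by
    have hid : Tendsto (fun t : ℝ ↦ (t : ℂ)) (𝓝[<] 1) (𝓝 1) :=
      (Complex.continuous_ofReal.tendsto' 1 1 Complex.ofReal_one).mono_left nhdsWithin_le_nhds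
    simpa only [one_mul, Function.comp_apply] using hid.mul habel
  have hlog : Tendsto (fun t : ℝ ↦ -Complex.log (1 - z * t)) (𝓝[<] 1)
      (𝓝 (-Complex.log (1 - z))) := by
    have hcont : ContinuousAt (fun t : ℝ ↦ -Complex.log (1 - z * t)) 1 := by
      refine (ContinuousAt.clog (by fun_prop) ?_).neg
      simpa only [Complex.ofReal_one, mul_one] using one_sub_mem_slitPlane hz hz1
    simpa only [ContinuousAt, Complex.ofReal_one, mul_one] using
      hcont.tendsto.mono_left nhdsWithin_le_nhds
  suffices l = -Complex.log (1 - z) by rwa [← this]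
  refine tendsto_nhds_unique_of_eventuallyEq hmul hlog ?_
  filter_upwards [Ioo_mem_nhdsLT (zero_lt_one' ℝ)] with t ⟨ht0, ht1⟩
  have hzt : ‖z * t‖ < 1 := by
    rw [norm_mul, Complex.norm_of_nonneg ht0.le]
    nlinarith
  rw [← (Complex.hasSum_taylorSeries_neg_log' hzt).tsum_eq, ← tsum_mul_left]
  refine tsum_congr fun n ↦ ?_
  rw [mul_pow]
  ring

end LogSeries

section Digamma

variable {x : ℝ}

lemma hasDerivAt_log_comp_Gamma (hx : 0 < x) :
    HasDerivAt (log ∘ Gamma) (digamma x) x := by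
  have hdiff : DifferentiableAt ℝ Gamma x :=
    differentiableAt_Gamma fun n ↦ ((neg_nonpos.2 n.cast_nonneg).trans_lt hx).ne'
  exact hdiff.hasDerivAt.log (Gamma_pos_of_pos hx).ne'

lemma log_Gamma_add_one (hx : 0 < x) :
    (log ∘ Gamma) (x + 1) = (log ∘ Gamma) x + log x := by
  simp only [Function.comp_apply]
  rw [Gamma_add_one hx.ne', log_mul hx.ne' (Gamma_pos_of_pos hx).ne', add_comm]

lemma digamma_add_one (hx : 0 < x) : digamma (x + 1) = digamma x + 1 / x := by
  have hshift : HasDerivAt (fun y ↦ (log ∘ Gamma) (y + 1)) (digamma (x + 1)) x :=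
    (hasDerivAt_log_comp_Gamma (add_pos hx one_pos)).comp_add_const x 1
  have hsum : HasDerivAt (fun y ↦ (log ∘ Gamma) y + log y) (digamma x + 1 / x) x :=
    (hasDerivAt_log_comp_Gamma hx).add (one_div x ▸ hasDerivAt_log hx.ne')
  refine hshift.unique (hsum.congr_of_eventuallyEq ?_)
  filter_upwards [lt_mem_nhds hx] with y hy using log_Gamma_add_one hy

lemma digamma_add_natCast (hx : 0 < x) (n : ℕ) :
    digamma (x + n) = digamma x + ∑ k ∈ range n, 1 / (x + k) := by
  induction n with
  | zero => simp
  | succ n ih =>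
    rw [sum_range_succ, ← add_assoc, ← ih, ← digamma_add_one (by positivity), Nat.cast_succ,
      add_assoc]

lemma digamma_le_log (hx : 0 < x) : digamma x ≤ log x := by
  have h := convexOn_log_Gamma.le_slope_of_hasDerivAt hx (add_pos hx one_pos)
    (lt_add_one x) (hasDerivAt_log_comp_Gamma hx)
  rwa [slope_def_field, log_Gamma_add_one hx, add_sub_cancel_left, add_sub_cancel_left,
    div_one] at h

lemma log_le_digamma_add_one (hx : 0 < x) : log x ≤ digamma (x + 1) := by
  have hx1 : 0 < x + 1 := add_pos hx one_pos
  have h := convexOn_log_Gamma.slope_le_of_hasDerivAt hx hx1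
    (lt_add_one x) (hasDerivAt_log_comp_Gamma hx1)
  rwa [slope_def_field, log_Gamma_add_one hx, add_sub_cancel_left, add_sub_cancel_left,
    div_one] at h

lemma tendsto_digamma_add_natCast_sub_log (hx : 0 < x) :
    Tendsto (fun n : ℕ ↦ digamma (x + n) - log n) atTop (𝓝 0) := by
  have hlog (y : ℝ) : Tendsto (fun n : ℕ ↦ log (n + y) - log n) atTop (𝓝 0) :=
    (tendsto_log_comp_add_sub_log y).comp tendsto_natCast_atTop_atTop
  refine tendsto_of_tendsto_of_tendsto_of_le_of_le' (hlog (x - 1)) (hlog x) ?_ ?_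
  · filter_upwards [eventually_ge_atTop 1] with n hn
    have hn1 : (1 : ℝ) ≤ n := mod_cast hn
    have h := log_le_digamma_add_one (x := n + (x - 1)) (by linarith)
    rw [show (n : ℝ) + (x - 1) + 1 = x + n by ring] at h
    exact sub_le_sub_right h _
  · refine Eventually.of_forall fun n ↦ sub_le_sub_right ?_ _
    rw [add_comm (n : ℝ)]
    exact digamma_le_log (by positivity)

theorem tendsto_sum_one_div_sub_digamma (hx : 0 < x) :
    Tendsto (fun N : ℕ ↦ ∑ k ∈ range N, 1 / ((k : ℝ) + 1) - ∑ k ∈ range N, 1 / ((k : ℝ) + x)) atTop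
      (𝓝 (digamma x + eulerMascheroniConstant)) := by
  have h := (tendsto_harmonic_sub_log.sub (tendsto_digamma_add_natCast_sub_log hx)).const_add
    (digamma x)
  rw [sub_zero] at h
  refine h.congr fun N ↦ ?_
  have hharmonic : (harmonic N : ℝ) = ∑ k ∈ range N, 1 / ((k : ℝ) + 1) := by
    simp [harmonic]
  rw [digamma_add_natCast hx, hharmonic]
  simp only [add_comm x]
  ring

end Digamma

section FiniteSums

lemma sum_range_mul_ite_modEq {M : Type*} [AddCommMonoid M] {m q : ℕ} (hm : 0 < m) (hmq : m ≤ q)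
    (f : ℕ → M) (N : ℕ) :
    ∑ n ∈ range (q * N), (if n + 1 ≡ m [MOD q] then f (n + 1) else 0) =
      ∑ k ∈ range N, f (q * k + m) := by
  induction N with
  | zero => simp
  | succ N ih =>
    rw [mul_add_one, sum_range_add, sum_range_succ, ih]
    congr 1
    have hmod {r : ℕ} (hr : r < q) : q * N + r + 1 ≡ m [MOD q] ↔ r = m - 1 := by
      refine ⟨fun h ↦ ?_, fun h ↦ ?_⟩
      · have h' : r + 1 ≡ (m - 1) + 1 [MOD q] := by
          rw [Nat.sub_add_cancel hm]
          simpa [Nat.ModEq, add_assoc] using h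
        exact (Nat.ModEq.add_right_cancel' 1 h').eq_of_lt_of_lt hr (by omega)
      · rw [h, add_assoc, Nat.sub_add_cancel hm]
        simp [Nat.ModEq]
    rw [sum_congr rfl fun r hr ↦ by rw [if_congr (hmod (mem_range.1 hr)) rfl rfl],
      sum_ite_eq', if_pos (mem_range.2 (by omega)), add_assoc, Nat.sub_add_cancel hm]

lemma sum_Ico_one_eq_two_mul_of_symm {R : Type*} [NonAssocSemiring R] {f : ℕ → R} {q : ℕ}
    (hsymm : ∀ j ∈ Ico 1 q, f (q - j) = f j) (hmid : ∀ j, 2 * j = q → f j = 0) :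
    ∑ j ∈ Ico 1 q, f j = 2 * ∑ j ∈ Ico 1 ((q + 1) / 2), f j := by
  obtain rfl | hq := q.eq_zero_or_pos
  · simp
  have hreflect : ∑ j ∈ Ico (q + 1 - (q + 1) / 2) q, f j = ∑ j ∈ Ico 1 ((q + 1) / 2), f j := by
    have h := sum_Ico_reflect f 1 (m := (q + 1) / 2) (n := q) (by omega)
    rw [Nat.add_sub_cancel] at h
    rw [← h]
    exact sum_congr rfl fun j hj ↦ hsymm j (by simp only [mem_Ico] at hj ⊢; omega)
  have hupper : ∑ j ∈ Ico ((q + 1) / 2) q, f j = ∑ j ∈ Ico (q + 1 - (q + 1) / 2) q, f j := by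
    obtain ⟨a, rfl | rfl⟩ := q.even_or_odd'
    · rw [sum_eq_sum_Ico_succ_bot (by omega), hmid _ (by omega), zero_add]
      congr 2
      omega
    · congr 2
      omega
  rw [← sum_Ico_consecutive f (n := (q + 1) / 2) (by omega) (by omega), hupper, hreflect, two_mul]

end FiniteSums

section RootsOfUnity

lemma geom_sum_eq_zero_of_pow_eq_one {K : Type*} [DivisionRing K] {z : K} {q : ℕ} (hz : z ^ q = 1)
    (hz1 : z ≠ 1) : ∑ j ∈ range q, z ^ j = 0 := by
  rw [geom_sum_eq hz1, hz, sub_self, zero_div]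

lemma sub_one_mul_sum_range_mul_pow {R : Type*} [CommRing R] (z : R) (q : ℕ) :
    (z - 1) * ∑ j ∈ range q, j * z ^ j = q * z ^ q - z * ∑ j ∈ range q, z ^ j := by
  induction q with
  | zero => simp
  | succ q ih =>
    rw [sum_range_succ, sum_range_succ, mul_add, ih]
    push_cast
    ring

lemma sum_range_mul_pow_of_pow_eq_one {K : Type*} [Field K] {z : K} {q : ℕ} (hz : z ^ q = 1)
    (hz1 : z ≠ 1) : ∑ j ∈ range q, j * z ^ j = q / (z - 1) := by
  rw [eq_div_iff (sub_ne_zero.2 hz1), mul_comm, sub_one_mul_sum_range_mul_pow, hz,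
    geom_sum_eq_zero_of_pow_eq_one hz hz1, mul_one, mul_zero, sub_zero]

variable {K : Type*} [Field K] {ζ : K} {q : ℕ}

lemma sum_pow_div_pow_of_isPrimitiveRoot (hζ : IsPrimitiveRoot ζ q) (hq : 0 < q) (a b : ℕ) :
    ∑ j ∈ range q, (ζ ^ j) ^ a / (ζ ^ j) ^ b = if a ≡ b [MOD q] then (q : K) else 0 := by
  have hζ0 : ζ ≠ 0 := hζ.ne_zero hq.ne'
  have hpow (j : ℕ) : (ζ ^ j) ^ a / (ζ ^ j) ^ b = (ζ ^ a / ζ ^ b) ^ j := by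
    rw [div_pow, pow_right_comm, pow_right_comm ζ j b]
  have hone : ζ ^ a / ζ ^ b = 1 ↔ a ≡ b [MOD q] := by
    rw [div_eq_one_iff_eq (pow_ne_zero b hζ0),
      (hζ.isOfFinOrder hq.ne').pow_eq_pow_iff_modEq, ← hζ.eq_orderOf]
  simp only [hpow]
  split_ifs with h
  · simp [hone.2 h]
  · refine geom_sum_eq_zero_of_pow_eq_one ?_ (hone.not.2 h)
    rw [div_pow, pow_right_comm, pow_right_comm ζ b, hζ.pow_eq_one, one_pow, one_pow, div_one]

lemma sum_one_div_natCast_add_div [CharZero K] (hζ : IsPrimitiveRoot ζ q) {m : ℕ} (hm : 0 < m)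
    (hmq : m ≤ q) (N : ℕ) :
    ∑ k ∈ range N, 1 / ((k : K) + m / q) =
      ∑ j ∈ range q, ((ζ ^ j) ^ m)⁻¹ * ∑ n ∈ range (q * N), (ζ ^ j) ^ (n + 1) / ((n : K) + 1) := by
  have hq : 0 < q := hm.trans_le hmq
  have hqK : (q : K) ≠ 0 := Nat.cast_ne_zero.2 hq.ne'
  calc ∑ k ∈ range N, 1 / ((k : K) + m / q)
      = ∑ k ∈ range N, (q : K) / (q * k + m : ℕ) := by
        refine sum_congr rfl fun k _ ↦ ?_
        push_cast
        field_simp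
    _ = ∑ n ∈ range (q * N), if n + 1 ≡ m [MOD q] then (q : K) / (n + 1 : ℕ) else 0 :=
        (sum_range_mul_ite_modEq hm hmq (fun n ↦ (q : K) / n) N).symm
    _ = ∑ n ∈ range (q * N), ∑ j ∈ range q, (ζ ^ j) ^ (n + 1) / (ζ ^ j) ^ m / ((n : K) + 1) := by
        refine sum_congr rfl fun n _ ↦ ?_
        rw [← sum_div, sum_pow_div_pow_of_isPrimitiveRoot hζ hq, ite_div, zero_div, Nat.cast_succ]
    _ = ∑ j ∈ range q, ((ζ ^ j) ^ m)⁻¹ *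
          ∑ n ∈ range (q * N), (ζ ^ j) ^ (n + 1) / ((n : K) + 1) := by
        rw [sum_comm]
        refine sum_congr rfl fun j _ ↦ ?_
        rw [mul_sum]
        exact sum_congr rfl fun n _ ↦ by ring

theorem digamma_natCast_div_eq_sum_log {ζ : ℂ} {m q : ℕ} (hζ : IsPrimitiveRoot ζ q) (hm : 0 < m)
    (hmq : m ≤ q) :
    (digamma (m / q) + eulerMascheroniConstant : ℝ) =
      ∑ j ∈ Ico 1 q, (((ζ ^ j) ^ m)⁻¹ - 1) * Complex.log (1 - ζ ^ j) := by
  have hq : 0 < q := hm.trans_le hmq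
  have hqN : Tendsto (fun N : ℕ ↦ q * N) atTop atTop := tendsto_id.const_mul_atTop' hq
  have hlog : Tendsto (fun N : ℕ ↦ ∑ j ∈ Ico 1 q, (1 - ((ζ ^ j) ^ m)⁻¹) *
      ∑ n ∈ range (q * N), (ζ ^ j) ^ (n + 1) / ((n : ℂ) + 1)) atTop
      (𝓝 (∑ j ∈ Ico 1 q, (1 - ((ζ ^ j) ^ m)⁻¹) * -Complex.log (1 - ζ ^ j))) := by
    refine tendsto_finsetSum _ fun j hj ↦ Tendsto.const_mul _ ?_
    obtain ⟨hj1, hjq⟩ := mem_Ico.1 hj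
    have hnorm : ‖ζ ^ j‖ ≤ 1 := by rw [norm_pow, hζ.norm'_eq_one hq.ne', one_pow]
    exact (tendsto_sum_pow_div_neg_log hnorm
      (hζ.pow_ne_one_of_pos_of_lt (by omega) hjq)).comp hqN
  have hdigamma := (Complex.continuous_ofReal.tendsto _).comp
    (tendsto_sum_one_div_sub_digamma (x := m / q) (by positivity))
  rw [tendsto_nhds_unique (hdigamma.congr fun N ↦ ?_) hlog]
  · exact sum_congr rfl fun j _ ↦ by ring
  -- The harmonic sum is the case `m = q` of the same filter formula.
  have hharmonic := sum_one_div_natCast_add_div hζ hq le_rfl N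
  simp only [pow_right_comm ζ _ q, hζ.pow_eq_one, one_pow, inv_one, one_mul,
    div_self (Nat.cast_ne_zero.2 hq.ne' : (q : ℂ) ≠ 0)] at hharmonic
  rw [Function.comp_apply]
  push_cast
  rw [hharmonic, sum_one_div_natCast_add_div hζ hm hmq, ← sum_sub_distrib, range_eq_Ico,
    sum_eq_sum_Ico_succ_bot hq]
  simp [sub_mul]

end RootsOfUnity

section Trig

lemma one_sub_exp_two_mul_I (θ : ℝ) :
    1 - Complex.exp ((2 * θ : ℝ) * Complex.I) =
      (2 * sin θ : ℝ) * Complex.exp ((θ - π / 2 : ℝ) * Complex.I) := by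
  apply Complex.ext <;>
    simp only [Complex.sub_re, Complex.sub_im, Complex.one_re, Complex.one_im,
      Complex.re_ofReal_mul, Complex.im_ofReal_mul, Complex.exp_ofReal_mul_I_re,
      Complex.exp_ofReal_mul_I_im, cos_sub_pi_div_two, sin_sub_pi_div_two, cos_two_mul,
      sin_two_mul]
  · linear_combination -2 * sin_sq θ
  · ring

lemma log_one_sub_exp_two_mul_I {θ : ℝ} (h0 : 0 < θ) (hpi : θ < π) :
    Complex.log (1 - Complex.exp ((2 * θ : ℝ) * Complex.I)) =
      log (2 * sin θ) + (θ - π / 2 : ℝ) * Complex.I := by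
  have hsin : 0 < 2 * sin θ := mul_pos two_pos (sin_pos_of_pos_of_lt_pi h0 hpi)
  rw [one_sub_exp_two_mul_I, Complex.log_ofReal_mul hsin (Complex.exp_ne_zero _), Complex.log_exp]
  · rw [Complex.im_ofReal_mul, Complex.I_im]
    linarith
  · rw [Complex.im_ofReal_mul, Complex.I_im]
    linarith

lemma exp_ofReal_mul_I_pow (x : ℝ) (n : ℕ) :
    Complex.exp (x * Complex.I) ^ n = Complex.exp ((n * x : ℝ) * Complex.I) := by
  rw [← Complex.exp_nat_mul]
  push_cast
  ring_nf

lemma norm_one_sub_exp_two_mul_I {θ : ℝ} (h : 0 ≤ sin θ) :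
    ‖1 - Complex.exp ((2 * θ : ℝ) * Complex.I)‖ = 2 * sin θ := by
  rw [one_sub_exp_two_mul_I, norm_mul, Complex.norm_exp_ofReal_mul_I, mul_one,
    Complex.norm_of_nonneg (by positivity)]

lemma im_inv_exp_two_mul_I_sub_one (θ : ℝ) :
    (Complex.exp ((2 * θ : ℝ) * Complex.I) - 1)⁻¹.im = -cot θ / 2 := by
  rw [← neg_sub 1, one_sub_exp_two_mul_I, inv_neg, mul_inv, ← Complex.exp_neg,
    ← neg_mul (Complex.ofReal _), ← Complex.ofReal_neg, ← Complex.ofReal_inv, Complex.neg_im,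
    Complex.im_ofReal_mul, Complex.exp_ofReal_mul_I_im, sin_neg, sin_sub_pi_div_two,
    cot_eq_cos_div_sin]
  ring

lemma exp_two_pi_I_div_pow (q n : ℕ) :
    Complex.exp (2 * π * Complex.I / q) ^ n = Complex.exp ((2 * (π * n / q) : ℝ) * Complex.I) := by
  rw [← Complex.exp_nat_mul]
  push_cast
  ring_nf

lemma exp_two_pi_I_div_pow_pow (q m j : ℕ) :
    (Complex.exp (2 * π * Complex.I / q) ^ m) ^ j =
      Complex.exp ((2 * π * j * m / q : ℝ) * Complex.I) := by
  rw [exp_two_pi_I_div_pow, exp_ofReal_mul_I_pow]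
  ring_nf

lemma exp_two_pi_I_div_pow_ne_one {m q : ℕ} (hm : 0 < m) (hmq : m < q) :
    Complex.exp (2 * π * Complex.I / q) ^ m ≠ 1 :=
  (Complex.isPrimitiveRoot_exp q (hm.trans hmq).ne').pow_ne_one_of_pos_of_lt hm.ne' hmq

lemma exp_two_pi_I_div_pow_pow_eq_one {q : ℕ} (hq : 0 < q) (m : ℕ) :
    (Complex.exp (2 * π * Complex.I / q) ^ m) ^ q = 1 := by
  rw [pow_right_comm, (Complex.isPrimitiveRoot_exp q hq.ne').pow_eq_one, one_pow]

lemma sum_Ico_exp_two_pi_mul_div {m q : ℕ} (hm : 0 < m) (hmq : m < q) :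
    ∑ j ∈ Ico 1 q, Complex.exp ((2 * π * j * m / q : ℝ) * Complex.I) = -1 := by
  have hq : 0 < q := hm.trans hmq
  have h := geom_sum_eq_zero_of_pow_eq_one (exp_two_pi_I_div_pow_pow_eq_one hq m)
    (exp_two_pi_I_div_pow_ne_one hm hmq)
  rw [range_eq_Ico, sum_eq_sum_Ico_succ_bot hq, pow_zero, add_comm] at h
  simpa only [exp_two_pi_I_div_pow_pow] using eq_neg_of_add_eq_zero_left h

lemma sum_Ico_cos_two_pi_mul_div {m q : ℕ} (hm : 0 < m) (hmq : m < q) :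
    ∑ j ∈ Ico 1 q, cos (2 * π * j * m / q) = -1 := by
  simpa only [Complex.re_sum, Complex.exp_ofReal_mul_I_re, Complex.neg_re, Complex.one_re] using
    congrArg Complex.re (sum_Ico_exp_two_pi_mul_div hm hmq)

lemma sum_Ico_sin_two_pi_mul_div {m q : ℕ} (hm : 0 < m) (hmq : m < q) :
    ∑ j ∈ Ico 1 q, sin (2 * π * j * m / q) = 0 := by
  simpa only [Complex.im_sum, Complex.exp_ofReal_mul_I_im, Complex.neg_im, Complex.one_im, neg_zero]
    using congrArg Complex.im (sum_Ico_exp_two_pi_mul_div hm hmq)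

lemma sum_Ico_mul_sin_two_pi_mul_div {m q : ℕ} (hm : 0 < m) (hmq : m < q) :
    ∑ j ∈ Ico 1 q, j * sin (2 * π * j * m / q) = -(q / 2 * cot (π * m / q)) := by
  have hq : 0 < q := hm.trans hmq
  have h := congrArg Complex.im (sum_range_mul_pow_of_pow_eq_one
    (exp_two_pi_I_div_pow_pow_eq_one hq m) (exp_two_pi_I_div_pow_ne_one hm hmq))
  rw [range_eq_Ico, sum_eq_sum_Ico_succ_bot hq, Nat.cast_zero, zero_mul, zero_add] at h
  simp only [exp_two_pi_I_div_pow_pow] at h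
  rw [exp_two_pi_I_div_pow, div_eq_mul_inv (q : ℂ), Complex.im_sum] at h
  simp only [← Complex.ofReal_natCast, Complex.im_ofReal_mul, Complex.exp_ofReal_mul_I_im,
    im_inv_exp_two_mul_I_sub_one] at h
  rw [h]
  ring

variable {q : ℕ}

lemma pi_mul_div_mem_Ioo {j : ℕ} (hj : 0 < j) (hjq : j < q) : π * j / q ∈ Set.Ioo 0 π := by
  have hq : (0 : ℝ) < q := Nat.cast_pos.2 (hj.trans hjq)
  refine ⟨by positivity, ?_⟩
  rw [div_lt_iff₀ hq]
  gcongr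

lemma sin_pi_mul_div_pos {j : ℕ} (hj : 0 < j) (hjq : j < q) : 0 < sin (π * j / q) :=
  sin_pos_of_mem_Ioo (pi_mul_div_mem_Ioo hj hjq)

lemma sum_log_two_mul_sin (hq : 0 < q) : ∑ j ∈ Ico 1 q, log (2 * sin (π * j / q)) = log q := by
  obtain ⟨n, rfl⟩ := Nat.exists_eq_add_one_of_ne_zero hq.ne'
  set ζ := Complex.exp (2 * π * Complex.I / (n + 1 : ℕ)) with hζ_def
  have hζ : IsPrimitiveRoot ζ (n + 1) := Complex.isPrimitiveRoot_exp (n + 1) hq.ne'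
  have hprod : ∏ j ∈ Ico 1 (n + 1), (1 - ζ ^ j) = ((n + 1 : ℕ) : ℂ) := by
    rw [prod_Ico_eq_prod_range, Nat.add_sub_cancel, Nat.cast_succ, ← hζ.prod_one_sub_pow_eq_order]
    simp only [add_comm 1]
  have hnorm {j : ℕ} (hj : j ∈ Ico 1 (n + 1)) :
      ‖1 - ζ ^ j‖ = 2 * sin (π * j / (n + 1 : ℕ)) := by
    obtain ⟨hj1, hjn⟩ := mem_Ico.1 hj
    rw [hζ_def, exp_two_pi_I_div_pow, norm_one_sub_exp_two_mul_I (sin_pi_mul_div_pos hj1 hjn).le]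
  rw [← log_prod, ← prod_congr rfl fun j hj ↦ hnorm hj, ← norm_prod, hprod,
    Complex.norm_natCast]
  intro j hj
  obtain ⟨hj1, hjn⟩ := mem_Ico.1 hj
  exact (mul_pos two_pos (sin_pi_mul_div_pos hj1 hjn)).ne'

end Trig

section Gauss

variable {m q : ℕ}

lemma digamma_natCast_div_eq_sum (hm : 0 < m) (hmq : m ≤ q) :
    digamma (m / q) + eulerMascheroniConstant =
      ∑ j ∈ Ico 1 q, ((cos (2 * π * j * m / q) - 1) * log (2 * sin (π * j / q))
        + sin (2 * π * j * m / q) * (π * j / q - π / 2)) := by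
  have h := congrArg Complex.re (digamma_natCast_div_eq_sum_log
    (Complex.isPrimitiveRoot_exp q (hm.trans_le hmq).ne') hm hmq)
  rw [Complex.ofReal_re, Complex.re_sum] at h
  rw [h]
  refine sum_congr rfl fun j hj ↦ ?_
  obtain ⟨hj1, hjq⟩ := mem_Ico.1 hj
  obtain ⟨hpos, hlt⟩ := pi_mul_div_mem_Ioo hj1 hjq
  have hangle : m * (2 * (π * j / q)) = 2 * π * j * m / q := by ring
  rw [exp_two_pi_I_div_pow, exp_ofReal_mul_I_pow, hangle, log_one_sub_exp_two_mul_I hpos hlt,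
    ← Complex.exp_neg, ← neg_mul, ← Complex.ofReal_neg]
  simp only [Complex.mul_re, Complex.sub_re, Complex.sub_im, Complex.add_re, Complex.add_im,
    Complex.exp_ofReal_mul_I_re, Complex.exp_ofReal_mul_I_im, cos_neg, sin_neg,
    Complex.one_re, Complex.one_im, Complex.ofReal_re, Complex.ofReal_im, Complex.mul_im,
    Complex.I_re, Complex.I_im]
  ring

theorem digamma_natCast_div_eq_sum_log_sin (hm : 0 < m) (hmq : m < q) :
    digamma (m / q) = -eulerMascheroniConstant - log (2 * q) - π / 2 * cot (π * m / q)
      + ∑ j ∈ Ico 1 q, cos (2 * π * j * m / q) * log (sin (π * j / q)) := by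
  have hq : 0 < q := hm.trans hmq
  have hq0 : (q : ℝ) ≠ 0 := Nat.cast_ne_zero.2 hq.ne'
  have hterm : ∀ j ∈ Ico 1 q,
      (cos (2 * π * j * m / q) - 1) * log (2 * sin (π * j / q))
        + sin (2 * π * j * m / q) * (π * j / q - π / 2) =
      cos (2 * π * j * m / q) * log (sin (π * j / q))
        + log 2 * cos (2 * π * j * m / q)
        - log (2 * sin (π * j / q))
        + π / q * (j * sin (2 * π * j * m / q))
        - π / 2 * sin (2 * π * j * m / q) := fun j hj ↦ by
    obtain ⟨hj1, hjq⟩ := mem_Ico.1 hj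
    rw [log_mul two_ne_zero (sin_pi_mul_div_pos hj1 hjq).ne']
    ring
  have h := digamma_natCast_div_eq_sum hm hmq.le
  rw [sum_congr rfl hterm] at h
  simp only [sum_add_distrib, sum_sub_distrib, ← mul_sum, sum_Ico_cos_two_pi_mul_div hm hmq,
    sum_Ico_sin_two_pi_mul_div hm hmq, sum_Ico_mul_sin_two_pi_mul_div hm hmq,
    sum_log_two_mul_sin hq] at h
  have hcot : π / q * (q / 2 * cot (π * m / q)) = π / 2 * cot (π * m / q) := by
    field_simp
  rw [log_mul two_ne_zero hq0]
  linear_combination h - hcot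

theorem digamma_natCast_div (hm : 0 < m) (hmq : m < q) :
    digamma (m / q) = -eulerMascheroniConstant - log (2 * q) - π / 2 * cot (π * m / q)
      + 2 * ∑ j ∈ Ico 1 ((q + 1) / 2), cos (2 * π * j * m / q) * log (sin (π * j / q)) := by
  have hq0 : (q : ℝ) ≠ 0 := Nat.cast_ne_zero.2 (hm.trans hmq).ne'
  rw [digamma_natCast_div_eq_sum_log_sin hm hmq, sum_Ico_one_eq_two_mul_of_symm]
  · intro j hj
    rw [Nat.cast_sub (mem_Ico.1 hj).2.le]
    have hcos : 2 * π * (q - j) * m / q = m * (2 * π) - 2 * π * j * m / q := by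
      field_simp
    have hsin : π * (q - j) / q = π - π * j / q := by
      field_simp
    rw [hcos, hsin, cos_nat_mul_two_pi_sub, sin_pi_sub]
  · rintro j rfl
    have hangle : π * j / (2 * j : ℕ) = π / 2 := by
      push_cast at hq0 ⊢
      field_simp [right_ne_zero_of_mul hq0]
    rw [hangle, sin_pi_div_two, log_one, mul_zero]

end Gauss

lemma cos_pi_div_twelve_pos : 0 < cos (π / 12) :=
  cos_pos_of_mem_Ioo ⟨by linarith [pi_pos], by linarith [pi_pos]⟩

lemma tan_pi_div_twelve : tan (π / 12) = 2 - √3 := by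
  have hdouble : 2 * (π / 12) = π / 6 := by ring
  have hsin_double := sin_two_mul (π / 12)
  have hcos_double := cos_two_mul (π / 12)
  rw [hdouble, sin_pi_div_six] at hsin_double
  rw [hdouble, cos_pi_div_six] at hcos_double
  have hsqrt : √3 ^ 2 = 3 := sq_sqrt (by norm_num)
  rw [tan_eq_sin_div_cos, div_eq_iff cos_pi_div_twelve_pos.ne']
  refine mul_right_cancel₀ (mul_pos two_pos cos_pi_div_twelve_pos).ne' ?_
  linear_combination (2 - √3) * hcos_double - hsin_double + hsqrt / 2

lemma cot_eleven_pi_div_twelve : cot (π * 11 / 12) = -(2 + √3) := by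
  have hangle : π * 11 / 12 = π - π / 12 := by ring
  have hsqrt : √3 ^ 2 = 3 := sq_sqrt (by norm_num)
  have hinv : (2 - √3)⁻¹ = 2 + √3 :=
    inv_eq_of_mul_eq_one_right (by linear_combination -hsqrt)
  rw [hangle, cot_eq_cos_div_sin, cos_pi_sub, sin_pi_sub, neg_div,
    ← inv_div, ← tan_eq_sin_div_cos, tan_pi_div_twelve, hinv]

lemma log_sin_pi_div_twelve_sub_log_sin_five_pi_div_twelve :
    log (sin (π / 12)) - log (sin (π * 5 / 12)) = log (2 - √3) := by
  have hangle : π * 5 / 12 = π / 2 - π / 12 := by ring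
  have hsin : 0 < sin (π / 12) :=
    sin_pos_of_pos_of_lt_pi (by positivity) (by linarith [pi_pos])
  rw [hangle, sin_pi_div_two_sub, ← log_div hsin.ne' cos_pi_div_twelve_pos.ne',
    ← tan_eq_sin_div_cos, tan_pi_div_twelve]

lemma log_sin_pi_div_six_sub_log_sin_pi_div_three :
    log (sin (π / 6)) - log (sin (π / 3)) = -log √3 := by
  rw [sin_pi_div_six, sin_pi_div_three, log_div one_ne_zero two_ne_zero,
    log_div (by positivity) two_ne_zero, log_one]
  ring

lemma sum_cos_mul_log_sin_pi_div_twelve :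
    2 * ∑ j ∈ Ico (1 : ℕ) 6, cos (2 * π * j * 11 / 12) * log (sin (π * j / 12)) =
      √3 * log (2 - √3) - log √3 := by
  have hcos (j : ℕ) : cos (2 * π * j * 11 / 12) = cos (π * j / 6) := by
    rw [← cos_nat_mul_two_pi_sub _ j]
    ring_nf
  have hcos2 : cos (π * 2 / 6) = 1 / 2 := by
    rw [← cos_pi_div_three]
    ring_nf
  have hcos3 : cos (π * 3 / 6) = 0 := by
    rw [← cos_pi_div_two]
    ring_nf
  have hcos4 : cos (π * 4 / 6) = -(1 / 2) := by
    rw [← cos_pi_div_three, ← cos_pi_sub]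
    ring_nf
  have hcos5 : cos (π * 5 / 6) = -(√3 / 2) := by
    rw [← cos_pi_div_six, ← cos_pi_sub]
    ring_nf
  have hangle2 : π * 2 / 12 = π / 6 := by ring
  have hangle4 : π * 4 / 12 = π / 3 := by ring
  rw [sum_Ico_eq_sum_range]
  simp only [Nat.reduceSub, Nat.reduceAdd, sum_range_succ, sum_range_zero, hcos, Nat.cast_ofNat,
    Nat.cast_one, mul_one, zero_add, add_zero, hcos2, hcos3, hcos4, hcos5, hangle2, hangle4,
    cos_pi_div_six]
  linear_combination √3 * log_sin_pi_div_twelve_sub_log_sin_five_pi_div_twelve +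
    log_sin_pi_div_six_sub_log_sin_pi_div_three

theorem digamma_eleven_twelfths :
    digamma (11 / 12) =
      -Real.eulerMascheroniConstant - Real.log 24
        + (2 + Real.sqrt 3) * (Real.pi / 2)
        + Real.sqrt 3 * Real.log (2 - Real.sqrt 3) - Real.log (Real.sqrt 3) := by
  have hgauss := digamma_natCast_div (m := 11) (q := 12) (by norm_num) (by norm_num)
  have hlog : (2 : ℝ) * 12 = 24 := by norm_num
  simp only [Nat.cast_ofNat, Nat.reduceAdd, Nat.reduceDiv, cot_eleven_pi_div_twelve,
    sum_cos_mul_log_sin_pi_div_twelve, hlog] at hgauss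
  linear_combination hgauss
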